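/- arXiv:1707.06158 — 2 statements merged into one kernel-verified Lean document; each statement's English description precedes it below -/
import Mathlib

section
/- For every dimension d ≥ 1 and every vector λ = (λ_1, …, λ_d) ∈ ℝ^d, letting D(λ) denote the d×d diagonal matrix with diagonal entries λ_1, …, λ_d, S_1(λ) = ∑_{j=1}^d λ_j and S_2(λ) = ∑_{j=1}^d λ_j², one has ∫_{U(d)} ∑_{j=1}^d | (U* D(λ) U)_{jj} − S_1(λ)/d |² dμ(U) = S_2(λ)/(d+1) − S_1(λ)²/(d(d+1)), where U* denotes the conjugate transpose of U. -/
/-!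
Fix a column `j` and put `x i = |U i j|²`, so `∑ i, x i = 1` by unitarity and
`(U* D(λ) U) j j - S₁/d = ∑ i, (λ i - S₁/d) x i`. Everything reduces to the moments `E[x i x k]`.

* Invariance under permutation matrices: `E[x i²]` does not depend on `i`.
* For `i ≠ k`, invariance under the unitary that sends `(u i, u k)` to
  `((u i + ω u k)/√2, (u i - ω u k)/√2)` and fixes the other coordinates gives
  `E[x i x k] = E[(x i + x k)²/4 - Re(conj (u i) ω u k)²]`. Adding the cases `ω = 1` and `ω = I`
  and using `Re(z)² + Re(I z)² = |z|²` yields `4 E[x i x k] = E[x i²] + E[x k²]`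
  (`moment_offdiag`).
* Hence `E[x i x k] = b (1 + δ i k)` for a constant `b`, and `E[(∑ i, x i)²] = 1` forces
  `b = 1/(d(d+1))` (`moment_eq`).

As the coefficients `c i = λ i - S₁/d` sum to zero, `E[(∑ i, c i x i)²] = b ∑ i, (c i)²`; summing
over the `d` columns gives the formula.
-/

open MeasureTheory Matrix

/-- The Borel σ-algebra on the unitary group `U(d)` (as a subspace of the matrix space). -/
noncomputable instance (d : ℕ) : MeasurableSpace (Matrix.unitaryGroup (Fin d) ℂ) := borel _

instance unitaryGroup_borelSpace (d : ℕ) : BorelSpace (Matrix.unitaryGroup (Fin d) ℂ) := ⟨rfl⟩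

section Moments

variable {d : ℕ}

lemma continuous_entry (i j : Fin d) :
    Continuous fun U : Matrix.unitaryGroup (Fin d) ℂ => (U : Matrix (Fin d) (Fin d) ℂ) i j :=
  continuous_subtype_val.matrix_elem i j

/-- `|U i j|²`, the square modulus of a matrix entry. -/
noncomputable def sqEntry (j i : Fin d) (U : Matrix.unitaryGroup (Fin d) ℂ) : ℝ :=
  Complex.normSq ((U : Matrix (Fin d) (Fin d) ℂ) i j)

lemma continuous_sqEntry (j i : Fin d) : Continuous (sqEntry j i) :=
  Complex.continuous_normSq.comp (continuous_entry i j)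

lemma continuous_sqEntry_mul (j i k : Fin d) :
    Continuous fun U => sqEntry j i U * sqEntry j k U :=
  (continuous_sqEntry j i).mul (continuous_sqEntry j k)

lemma sqEntry_nonneg (j i : Fin d) (U : Matrix.unitaryGroup (Fin d) ℂ) : 0 ≤ sqEntry j i U :=
  Complex.normSq_nonneg _

lemma conjTranspose_diagonal_mul_diag (U : Matrix (Fin d) (Fin d) ℂ) (c : Fin d → ℂ) (j : Fin d) :
    (Uᴴ * Matrix.diagonal c * U) j j = ∑ i, c i * Complex.normSq (U i j) := by
  rw [Matrix.mul_apply]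
  refine Finset.sum_congr rfl fun i _ => ?_
  rw [Matrix.mul_diagonal, Matrix.conjTranspose_apply, Complex.normSq_eq_conj_mul_self,
    Complex.star_def]
  ring

lemma sum_sqEntry (j : Fin d) (U : Matrix.unitaryGroup (Fin d) ℂ) : ∑ i, sqEntry j i U = 1 := by
  have h := conjTranspose_diagonal_mul_diag (U : Matrix (Fin d) (Fin d) ℂ) (fun _ => 1) j
  have hU : (U : Matrix (Fin d) (Fin d) ℂ)ᴴ * (U : Matrix (Fin d) (Fin d) ℂ) = 1 :=
    Matrix.UnitaryGroup.star_mul_self U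
  rw [Matrix.diagonal_one, Matrix.mul_one, hU, Matrix.one_apply_eq] at h
  simp only [one_mul] at h
  exact_mod_cast h.symm

lemma sqEntry_le_one (j i : Fin d) (U : Matrix.unitaryGroup (Fin d) ℂ) : sqEntry j i U ≤ 1 := by
  rw [← sum_sqEntry j U]
  exact Finset.single_le_sum (fun i _ => sqEntry_nonneg j i U) (Finset.mem_univ i)

variable (μ : Measure (Matrix.unitaryGroup (Fin d) ℂ))

lemma integrable_sqEntry_mul [IsProbabilityMeasure μ] (j i k : Fin d) :
    Integrable (fun U => sqEntry j i U * sqEntry j k U) μ := by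
  refine Integrable.of_bound
    (continuous_sqEntry_mul j i k).aestronglyMeasurable 1
    (Filter.Eventually.of_forall fun U => ?_)
  rw [Real.norm_of_nonneg (mul_nonneg (sqEntry_nonneg _ _ _) (sqEntry_nonneg _ _ _))]
  exact mul_le_one₀ (sqEntry_le_one _ _ _) (sqEntry_nonneg _ _ _) (sqEntry_le_one _ _ _)

lemma integral_translate
    (hμ : ∀ V : Matrix.unitaryGroup (Fin d) ℂ, Measure.map (fun U => V * U) μ = μ)
    (V : Matrix.unitaryGroup (Fin d) ℂ) {f : Matrix.unitaryGroup (Fin d) ℂ → ℝ}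
    (hf : Continuous f) : ∫ U, f (V * U) ∂μ = ∫ U, f U ∂μ := by
  conv_rhs => rw [← hμ V]
  have hV : Continuous fun U : Matrix.unitaryGroup (Fin d) ℂ => V * U :=
    continuous_const.mul continuous_id
  rw [integral_map hV.measurable.aemeasurable hf.aestronglyMeasurable]

/-- The mixed moment `E[|U i j|² |U k j|²]`. -/
noncomputable def moment (j i k : Fin d) : ℝ := ∫ U, sqEntry j i U * sqEntry j k U ∂μ

/-- The permutation matrix of a transposition, as a unitary. -/
noncomputable def swapUnitary (i k : Fin d) : Matrix.unitaryGroup (Fin d) ℂ :=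
  ⟨Matrix.of fun a => Pi.single (Equiv.swap i k a) 1, by
    rw [Matrix.mem_unitaryGroup_iff]
    ext a b
    change (fun c => (Pi.single (Equiv.swap i k a) (1 : ℂ) : Fin d → ℂ) c) ⬝ᵥ
      star (Pi.single (Equiv.swap i k b) (1 : ℂ) : Fin d → ℂ) = _
    simp [Matrix.one_apply, Pi.single_apply, eq_comm]⟩

lemma swapUnitary_mul_apply (i k : Fin d) (U : Matrix.unitaryGroup (Fin d) ℂ) (a j : Fin d) :
    ((swapUnitary i k * U : Matrix.unitaryGroup (Fin d) ℂ) : Matrix (Fin d) (Fin d) ℂ) a j =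
      (U : Matrix (Fin d) (Fin d) ℂ) (Equiv.swap i k a) j := by
  change (Pi.single (Equiv.swap i k a) (1 : ℂ) : Fin d → ℂ) ⬝ᵥ
    (fun c => (U : Matrix (Fin d) (Fin d) ℂ) c j) = _
  simp

lemma moment_diag_eq
    (hμ : ∀ V : Matrix.unitaryGroup (Fin d) ℂ, Measure.map (fun U => V * U) μ = μ)
    (j i k : Fin d) : moment μ j i i = moment μ j k k := by
  unfold moment
  rw [← integral_translate μ hμ (swapUnitary i k) (continuous_sqEntry_mul j i i)]
  simp [sqEntry, swapUnitary_mul_apply]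

/-- Row `a` of the matrix of the plane unitary
`(u i, u k) ↦ ((u i + ω u k)/√2, (u i - ω u k)/√2)`; the other coordinates are fixed. -/
noncomputable def planeRow (ω : ℂ) (i k a : Fin d) : Fin d → ℂ :=
  if a = i then ((√2)⁻¹ : ℂ) • (Pi.single i 1 + Pi.single k ω)
  else if a = k then ((√2)⁻¹ : ℂ) • (Pi.single i 1 - Pi.single k ω)
  else Pi.single a 1

lemma inv_sqrt_two_mul_self : ((√2 : ℝ) : ℂ)⁻¹ * ((√2 : ℝ) : ℂ)⁻¹ = 1 / 2 := by
  rw [← mul_inv, ← Complex.ofReal_mul, Real.mul_self_sqrt (by norm_num)]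
  norm_num

lemma planeRow_orthonormal {ω : ℂ} (hω : ω * star ω = 1) {i k : Fin d} (hik : i ≠ k)
    (a b : Fin d) : planeRow ω i k a ⬝ᵥ star (planeRow ω i k b) = if a = b then 1 else 0 := by
  have hs := inv_sqrt_two_mul_self
  have hω' : ω * (starRingEnd ℂ) ω = 1 := hω
  unfold planeRow
  rcases eq_or_ne a i with rfl | hai
  · rcases eq_or_ne b a with rfl | hbi
    · simp [hik, hik.symm]
      linear_combination 2 * hs + ((√2 : ℝ) : ℂ)⁻¹ * ((√2 : ℝ) : ℂ)⁻¹ * hω'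
    · rcases eq_or_ne b k with rfl | hbk
      · simp [hik, hik.symm]
        linear_combination -((√2 : ℝ) : ℂ)⁻¹ * hω'
      · simp [hbi, hbi.symm, hbk]
  · rcases eq_or_ne a k with rfl | hak
    · rcases eq_or_ne b i with rfl | hbi
      · simp [hik, hik.symm]
        linear_combination -((√2 : ℝ) : ℂ)⁻¹ * ((√2 : ℝ) : ℂ)⁻¹ * hω'
      · rcases eq_or_ne b a with rfl | hba
        · simp [hik, hik.symm]
          linear_combination 2 * hs + ((√2 : ℝ) : ℂ)⁻¹ * ((√2 : ℝ) : ℂ)⁻¹ * hω'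
        · simp [hbi, hba, hba.symm, hik.symm]
    · rcases eq_or_ne b i with rfl | hbi
      · simp [hai, hak]
      · rcases eq_or_ne b k with rfl | hbk
        · simp [hai, hak, hik.symm]
        · simp [hai, hak, hbi, hbk, Pi.single_apply, eq_comm]

/-- The plane unitary with rows `planeRow`. -/
noncomputable def planeUnitary {ω : ℂ} (hω : ω * star ω = 1) {i k : Fin d} (hik : i ≠ k) :
    Matrix.unitaryGroup (Fin d) ℂ :=
  ⟨Matrix.of (planeRow ω i k), by
    rw [Matrix.mem_unitaryGroup_iff]
    ext a b
    rw [Matrix.one_apply]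
    exact planeRow_orthonormal hω hik a b⟩

lemma planeUnitary_mul_apply {ω : ℂ} (hω : ω * star ω = 1) {i k : Fin d} (hik : i ≠ k)
    (U : Matrix.unitaryGroup (Fin d) ℂ) (a j : Fin d) :
    ((planeUnitary hω hik * U : Matrix.unitaryGroup (Fin d) ℂ) :
      Matrix (Fin d) (Fin d) ℂ) a j =
      planeRow ω i k a ⬝ᵥ (fun c => (U : Matrix (Fin d) (Fin d) ℂ) c j) := rfl

/-- `x i x k` after the plane unitary: `|p + q|² |p - q|² / 4` for `p = u i`, `q = ω u k`. -/
lemma sqEntry_mul_planeUnitary {ω : ℂ} (hω : ω * star ω = 1) {i k : Fin d} (hik : i ≠ k)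
    (U : Matrix.unitaryGroup (Fin d) ℂ) (j : Fin d) :
    sqEntry j i (planeUnitary hω hik * U) * sqEntry j k (planeUnitary hω hik * U) =
      Complex.normSq ((U : Matrix (Fin d) (Fin d) ℂ) i j + ω * (U : Matrix (Fin d) (Fin d) ℂ) k j) *
      Complex.normSq ((U : Matrix (Fin d) (Fin d) ℂ) i j - ω * (U : Matrix (Fin d) (Fin d) ℂ) k j)
        / 4 := by
  have hs : (√2)⁻¹ * (√2)⁻¹ = (1 / 2 : ℝ) := by
    rw [← mul_inv, Real.mul_self_sqrt (by norm_num)]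
    norm_num
  unfold sqEntry
  rw [planeUnitary_mul_apply, planeUnitary_mul_apply]
  simp only [planeRow, if_true, hik.symm, if_false, smul_dotProduct, add_dotProduct,
    sub_dotProduct, single_dotProduct, smul_eq_mul, one_mul, Complex.normSq_mul,
    Complex.normSq_inv, Complex.normSq_ofReal, mul_inv, hs]
  ring

lemma moment_offdiag [IsProbabilityMeasure μ]
    (hμ : ∀ V : Matrix.unitaryGroup (Fin d) ℂ, Measure.map (fun U => V * U) μ = μ)
    (j : Fin d) {i k : Fin d} (hik : i ≠ k) :
    4 * moment μ j i k = moment μ j i i + moment μ j k k := by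
  have h1 : (1 : ℂ) * star (1 : ℂ) = 1 := by simp
  have hI : Complex.I * star Complex.I = 1 := by simp
  have hc := continuous_sqEntry_mul j i k
  have key : ∀ U : Matrix.unitaryGroup (Fin d) ℂ,
      sqEntry j i (planeUnitary h1 hik * U) * sqEntry j k (planeUnitary h1 hik * U) +
        sqEntry j i (planeUnitary hI hik * U) * sqEntry j k (planeUnitary hI hik * U) =
      1 / 2 * (sqEntry j i U * sqEntry j i U + sqEntry j k U * sqEntry j k U) := by
    intro U
    rw [sqEntry_mul_planeUnitary, sqEntry_mul_planeUnitary]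
    simp only [sqEntry, Complex.normSq_apply, Complex.add_re, Complex.add_im, Complex.sub_re,
      Complex.sub_im, Complex.mul_re, Complex.mul_im, Complex.I_re, Complex.I_im, Complex.one_re,
      Complex.one_im]
    ring
  have hint : ∀ V : Matrix.unitaryGroup (Fin d) ℂ,
      Integrable (fun U => sqEntry j i (V * U) * sqEntry j k (V * U)) μ := by
    intro V
    have h := integrable_sqEntry_mul μ j i k
    rw [← hμ V] at h
    exact h.comp_measurable (continuous_const.mul continuous_id).measurable
  have hsum := integral_add (hint (planeUnitary h1 hik)) (hint (planeUnitary hI hik))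
  simp only [key] at hsum
  rw [integral_const_mul, integral_add (integrable_sqEntry_mul μ j i i)
    (integrable_sqEntry_mul μ j k k), integral_translate μ hμ (planeUnitary h1 hik) hc,
    integral_translate μ hμ (planeUnitary hI hik) hc] at hsum
  unfold moment
  linarith

lemma integral_sq_linear [IsProbabilityMeasure μ] (j : Fin d) (c : Fin d → ℝ) :
    Integrable (fun U => (∑ i, c i * sqEntry j i U) ^ 2) μ ∧
    ∫ U, (∑ i, c i * sqEntry j i U) ^ 2 ∂μ = ∑ i, ∑ k, c i * c k * moment μ j i k := by
  have h : ∀ U : Matrix.unitaryGroup (Fin d) ℂ, (∑ i, c i * sqEntry j i U) ^ 2 =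
      ∑ i, ∑ k, c i * c k * (sqEntry j i U * sqEntry j k U) := by
    intro U
    rw [sq, Finset.sum_mul_sum]
    exact Finset.sum_congr rfl fun i _ => Finset.sum_congr rfl fun k _ => by ring
  have hi : ∀ i k, Integrable (fun U => c i * c k * (sqEntry j i U * sqEntry j k U)) μ :=
    fun i k => (integrable_sqEntry_mul μ j i k).const_mul _
  simp only [h]
  refine ⟨integrable_finsetSum _ fun i _ => integrable_finsetSum _ fun k _ => hi i k, ?_⟩
  rw [integral_finsetSum _ fun i _ => integrable_finsetSum _ fun k _ => hi i k]
  refine Finset.sum_congr rfl fun i _ => ?_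
  rw [integral_finsetSum _ fun k _ => hi i k]
  exact Finset.sum_congr rfl fun k _ => integral_const_mul _ _

lemma sum_sum_one_add_delta (c : Fin d → ℝ) (b : ℝ) :
    ∑ i, ∑ k, c i * c k * (b * (1 + if i = k then 1 else 0)) =
      b * ((∑ i, c i) ^ 2 + ∑ i, c i ^ 2) := by
  simp only [mul_add, mul_one, Finset.sum_add_distrib, mul_ite, mul_zero, Finset.sum_ite_eq,
    Finset.mem_univ, if_true]
  rw [sq, Finset.sum_mul_sum, Finset.mul_sum, Finset.mul_sum]
  congr 1
  · refine Finset.sum_congr rfl fun i _ => ?_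
    rw [Finset.mul_sum]
    exact Finset.sum_congr rfl fun k _ => by ring
  · exact Finset.sum_congr rfl fun i _ => by ring

lemma moment_eq [IsProbabilityMeasure μ]
    (hμ : ∀ V : Matrix.unitaryGroup (Fin d) ℂ, Measure.map (fun U => V * U) μ = μ)
    (j i k : Fin d) :
    moment μ j i k = 1 / (d * (d + 1)) * (1 + if i = k then 1 else 0) := by
  obtain ⟨b, hb⟩ : ∃ b, ∀ i k, moment μ j i k = b * (1 + if i = k then 1 else 0) := by
    refine ⟨moment μ j j j / 2, fun i k => ?_⟩
    by_cases hik : i = k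
    · subst hik
      rw [moment_diag_eq μ hμ j i j, if_pos rfl]
      ring
    · have h := moment_offdiag μ hμ j hik
      rw [moment_diag_eq μ hμ j i j, moment_diag_eq μ hμ j k j] at h
      rw [if_neg hik]
      linarith
  -- The normalization: `E[(∑ i, x i)²] = 1`.
  have hnorm := (integral_sq_linear μ j fun _ => 1).2
  simp only [hb] at hnorm
  rw [sum_sum_one_add_delta (fun _ => (1 : ℝ))] at hnorm
  simp only [one_mul, sum_sqEntry, one_pow, integral_const, probReal_univ, smul_eq_mul,
    Finset.sum_const, Finset.card_univ, Fintype.card_fin, nsmul_eq_mul, mul_one] at hnorm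
  have hd : (0 : ℝ) < d := by exact_mod_cast j.pos
  have hval : b = 1 / (d * (d + 1)) := by
    rw [eq_div_iff (by positivity)]
    linarith
  rw [hb, hval]

end Moments

/-- The second-moment formula for diagonal entries of conjugated diagonal matrices over
the unitary group `U(d)` with its normalized Haar (probability) measure `μ`:
`∫_{U(d)} ∑_j |(U* D(λ) U)_{jj} − S₁(λ)/d|² dμ(U) = S₂(λ)/(d+1) − S₁(λ)²/(d(d+1))`. -/
theorem unitary_diagonal_variance (d : ℕ) (hd : 1 ≤ d) (lam : Fin d → ℝ)
    (μ : Measure (Matrix.unitaryGroup (Fin d) ℂ)) [IsProbabilityMeasure μ]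
    (hμ : ∀ V : Matrix.unitaryGroup (Fin d) ℂ,
      Measure.map (fun U => V * U) μ = μ) :
    ∫ U : Matrix.unitaryGroup (Fin d) ℂ,
        ∑ j : Fin d,
          ‖((U : Matrix (Fin d) (Fin d) ℂ)ᴴ * Matrix.diagonal (fun i => (lam i : ℂ)) *
              (U : Matrix (Fin d) (Fin d) ℂ)) j j - (((∑ i, lam i) / d : ℝ) : ℂ)‖ ^ 2 ∂μ
      = (∑ i, lam i ^ 2) / (d + 1) - (∑ i, lam i) ^ 2 / (d * (d + 1)) := by
  have hd0 : (d : ℝ) ≠ 0 := by positivity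
  set m : ℝ := (∑ i, lam i) / d with hm
  have hpt : ∀ (U : Matrix.unitaryGroup (Fin d) ℂ) (j : Fin d),
      ‖((U : Matrix (Fin d) (Fin d) ℂ)ᴴ * Matrix.diagonal (fun i => (lam i : ℂ)) *
        (U : Matrix (Fin d) (Fin d) ℂ)) j j - (m : ℂ)‖ ^ 2 =
      (∑ i, (lam i - m) * sqEntry j i U) ^ 2 := by
    intro U j
    have h : ∑ i, (lam i - m) * sqEntry j i U = ∑ i, lam i * sqEntry j i U - m := by
      simp only [sub_mul, Finset.sum_sub_distrib, ← Finset.mul_sum, sum_sqEntry, mul_one]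
    rw [h, conjTranspose_diagonal_mul_diag]
    simp only [sqEntry]
    rw [← sq_abs (∑ i, _ - m), ← Real.norm_eq_abs, ← Complex.norm_real]
    push_cast
    rfl
  have hc : ∑ i, (lam i - m) = 0 := by
    rw [Finset.sum_sub_distrib, Finset.sum_const, Finset.card_univ, Fintype.card_fin,
      nsmul_eq_mul, hm]
    field_simp
    ring
  have hc2 : ∑ i, (lam i - m) ^ 2 = ∑ i, lam i ^ 2 - (∑ i, lam i) ^ 2 / d := by
    have h : ∀ i, (lam i - m) ^ 2 = lam i ^ 2 - 2 * m * lam i + m ^ 2 := fun i => by ring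
    simp only [h, Finset.sum_add_distrib, Finset.sum_sub_distrib, ← Finset.mul_sum,
      Finset.sum_const, Finset.card_univ, Fintype.card_fin, nsmul_eq_mul]
    rw [hm]
    field_simp
    ring
  have hcol : ∀ j : Fin d, ∫ U, (∑ i, (lam i - m) * sqEntry j i U) ^ 2 ∂μ =
      1 / (d * (d + 1)) * (∑ i, lam i ^ 2 - (∑ i, lam i) ^ 2 / d) := by
    intro j
    rw [(integral_sq_linear μ j _).2]
    simp only [moment_eq μ hμ]
    rw [sum_sum_one_add_delta fun i => lam i - m, hc, hc2]
    ring
  simp only [hpt]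
  rw [integral_finsetSum _ fun j _ => (integral_sq_linear μ j _).1]
  simp only [hcol, Finset.sum_const, Finset.card_univ, Fintype.card_fin, nsmul_eq_mul]
  field_simp
end

section
/- For every dimension d ≥ 1 and every Hermitian matrix H ∈ M_d(ℂ) (i.e. H* = H), one has ∫_{U(d)} ∑_{j=1}^d | (U* H U)_{jj} − Tr(H)/d |² dμ(U) = Tr(H²)/(d+1) − (Tr H)²/(d(d+1)), where U* denotes the conjugate transpose of U. -/
/-!
The quantity `(Uᴴ H U) j j` depends on the `j`-th column `u` of `U` only, and left invariance of `μ`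
says that the law of `u` is invariant under every unitary. Translating by an eigenvector matrix of
`H` replaces `H` by the diagonal matrix of its eigenvalues `l`, so that `(Uᴴ H U) j j` becomes
`∑ i, l i * |u i|²`, and everything reduces to the moments `m i k = ∫ |u i|² |u k|²`.

These are found from three facts. Exchanging coordinates gives `m i i = m k k`
(`moment_self_eq`). Applying a reflection with coefficients `3/5`, `4/5` in the `(i, k)` plane and
averaging over the phases `1, -1, I, -I` of `u k` gives `m i i = 2 * m i k` for `i ≠ k`
(`moment_self_eq_two_mul`). Finally `∑ i, ∑ k, m i k = 1` because `u` is a unit vector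
(`sum_moment`). Hence `m i k = (1 + δ i k) / (d (d + 1))` (`moment_eq`).
Since the diagonal of `Uᴴ H U` always sums to `Tr H`, the sum of squared deviations is the
sum of squares minus `(Tr H)² / d`, and its mean is `((Tr H)² + Tr H²) / (d + 1) - (Tr H)² / d`.
-/

open MeasureTheory Matrix

namespace UnitaryVariance

variable {d : ℕ}

instance : BorelSpace (Matrix.unitaryGroup (Fin d) ℂ) := ⟨rfl⟩

/-! ### Integration over the unitary group -/

theorem normSq_entry_le_one (U : Matrix.unitaryGroup (Fin d) ℂ) (i j : Fin d) :
    Complex.normSq ((U : Matrix (Fin d) (Fin d) ℂ) i j) ≤ 1 := by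
  rw [Complex.normSq_eq_norm_sq]
  exact pow_le_one₀ (norm_nonneg _) (entry_norm_bound_of_unitary U.2 i j)

theorem continuous_entry (i j : Fin d) :
    Continuous fun U : Matrix.unitaryGroup (Fin d) ℂ => (U : Matrix (Fin d) (Fin d) ℂ) i j :=
  continuous_subtype_val.matrix_elem i j

theorem integral_translate {μ : Measure (Matrix.unitaryGroup (Fin d) ℂ)}
    (hμ : ∀ V : Matrix.unitaryGroup (Fin d) ℂ, Measure.map (fun U => V * U) μ = μ)
    {f : Matrix.unitaryGroup (Fin d) ℂ → ℝ} (hf : Continuous f)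
    (V : Matrix.unitaryGroup (Fin d) ℂ) : ∫ U, f (V * U) ∂μ = ∫ U, f U ∂μ := by
  have hV : Measurable fun U : Matrix.unitaryGroup (Fin d) ℂ => V * U :=
    (continuous_const_mul V).measurable
  conv_rhs => rw [← hμ V]
  exact (integral_map hV.aemeasurable hf.aestronglyMeasurable).symm

theorem integrable_normSq_mul (μ : Measure (Matrix.unitaryGroup (Fin d) ℂ)) [IsProbabilityMeasure μ]
    (i k j : Fin d) :
    Integrable (fun U : Matrix.unitaryGroup (Fin d) ℂ =>
      Complex.normSq ((U : Matrix (Fin d) (Fin d) ℂ) i j) *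
        Complex.normSq ((U : Matrix (Fin d) (Fin d) ℂ) k j)) μ := by
  refine Integrable.of_bound (C := 1) (Continuous.aestronglyMeasurable ?_) (ae_of_all _ fun U => ?_)
  · exact (Complex.continuous_normSq.comp (continuous_entry i j)).mul
      (Complex.continuous_normSq.comp (continuous_entry k j))
  · rw [Real.norm_of_nonneg (mul_nonneg (Complex.normSq_nonneg _) (Complex.normSq_nonneg _))]
    exact mul_le_one₀ (normSq_entry_le_one U i j) (Complex.normSq_nonneg _)
      (normSq_entry_le_one U k j)

/-! ### Unitary matrices moving one or two coordinates -/

/-- The elementary matrix acting, for `i ≠ k`, by the reflection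
`(x, y) ↦ (c x + s y, s x - c y)` on the coordinates `i`, `k`
and by the identity on the others; it is unitary once `c² + s² = 1`. -/
def planeReflection (i k : Fin d) (c s : ℝ) : Matrix (Fin d) (Fin d) ℂ :=
  1 + Matrix.single i i ((c : ℂ) - 1) + Matrix.single i k (s : ℂ) + Matrix.single k i (s : ℂ)
    + Matrix.single k k (-(c : ℂ) - 1)

theorem planeReflection_mem {i k : Fin d} (hik : i ≠ k) {c s : ℝ} (h : c ^ 2 + s ^ 2 = 1) :
    planeReflection i k c s ∈ Matrix.unitaryGroup (Fin d) ℂ := by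
  have h' : (c : ℂ) ^ 2 + (s : ℂ) ^ 2 = 1 := by exact_mod_cast h
  have hstar : star (planeReflection i k c s) = planeReflection i k c s := by
    simp [planeReflection, Matrix.star_eq_conjTranspose, Matrix.conjTranspose_single]
    abel
  rw [Matrix.mem_unitaryGroup_iff, hstar]
  ext a b
  simp only [planeReflection, add_mul, mul_add, one_mul, mul_one, Matrix.single_mul_single_same,
    Matrix.single_mul_single_of_ne _ _ _ _ hik, Matrix.single_mul_single_of_ne _ _ _ _ hik.symm,
    Matrix.add_apply, Matrix.single_apply, Matrix.zero_apply]
  split_ifs <;> grind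

theorem planeReflection_mul_apply {i k : Fin d} (hik : i ≠ k) (c s : ℝ)
    (M : Matrix (Fin d) (Fin d) ℂ) (j : Fin d) :
    (planeReflection i k c s * M) i j = c * M i j + s * M k j := by
  simp [planeReflection, add_mul, hik]
  ring

theorem diagonal_update_mem (k : Fin d) {z : ℂ} (hz : z * star z = 1) :
    Matrix.diagonal (Function.update (1 : Fin d → ℂ) k z) ∈ Matrix.unitaryGroup (Fin d) ℂ := by
  rw [Matrix.mem_unitaryGroup_iff, Matrix.star_eq_conjTranspose, Matrix.diagonal_conjTranspose,
    Matrix.diagonal_mul_diagonal, ← Matrix.diagonal_one]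
  congr 1
  ext a
  by_cases ha : a = k
  · subst ha; simpa using hz
  · simp [ha]

/-! ### Fourth moments of a column -/

section Moments

variable {μ : Measure (Matrix.unitaryGroup (Fin d) ℂ)}

/-- The joint second moment of `|U i j|²` and `|U k j|²`. -/
noncomputable def moment (μ : Measure (Matrix.unitaryGroup (Fin d) ℂ)) (j i k : Fin d) : ℝ :=
  ∫ U : Matrix.unitaryGroup (Fin d) ℂ,
    Complex.normSq ((U : Matrix (Fin d) (Fin d) ℂ) i j) *
      Complex.normSq ((U : Matrix (Fin d) (Fin d) ℂ) k j) ∂μ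

theorem continuous_integrand (j i k : Fin d) :
    Continuous fun U : Matrix.unitaryGroup (Fin d) ℂ =>
      Complex.normSq ((U : Matrix (Fin d) (Fin d) ℂ) i j) *
        Complex.normSq ((U : Matrix (Fin d) (Fin d) ℂ) k j) :=
  (Complex.continuous_normSq.comp (continuous_entry i j)).mul
      (Complex.continuous_normSq.comp (continuous_entry k j))

/-- The fourth moment of an entry is unchanged when the entry is replaced by the combination
`c * U i j + s * z * U k j` of two entries of its column, with `c² + s² = 1` and `|z| = 1`: this
combination is an entry of a left translate of `U`. -/
theorem integral_combination
    (hμ : ∀ V : Matrix.unitaryGroup (Fin d) ℂ, Measure.map (fun U => V * U) μ = μ)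
    {i k : Fin d} (hik : i ≠ k) (j : Fin d) {c s : ℝ}
    (h : c ^ 2 + s ^ 2 = 1) {z : ℂ} (hz : z * star z = 1) :
    ∫ U : Matrix.unitaryGroup (Fin d) ℂ,
      Complex.normSq (c * (U : Matrix (Fin d) (Fin d) ℂ) i j +
        s * (z * (U : Matrix (Fin d) (Fin d) ℂ) k j)) ^ 2 ∂μ = moment μ j i i := by
  have := integral_translate hμ (continuous_integrand j i i)
    (⟨_, planeReflection_mem hik h⟩ * ⟨_, diagonal_update_mem k hz⟩)
  rw [moment, ← this]
  congr 1
  ext U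
  rw [← pow_two]
  congr 2
  simp only [Submonoid.coe_mul, mul_assoc, planeReflection_mul_apply hik, Matrix.diagonal_mul]
  simp [hik]

theorem moment_self_eq
    (hμ : ∀ V : Matrix.unitaryGroup (Fin d) ℂ, Measure.map (fun U => V * U) μ = μ)
    (j i k : Fin d) : moment μ j i i = moment μ j k k := by
  by_cases hik : i = k
  · rw [hik]
  have := integral_combination hμ hik j (c := 0) (s := 1) (by norm_num) (z := 1) (by simp)
  rw [← this, moment]
  simp [pow_two]

/-- Averaging `|3/5 x + 4/5 z y|⁴` over `z ∈ {1, -1, I, -I}` removes every term that depends on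
the relative phase of `x` and `y`; the rational point `(3/5, 4/5)` of the unit circle avoids
square roots. -/
theorem phase_average (x y : ℂ) :
    Complex.normSq ((3 / 5 : ℝ) * x + (4 / 5 : ℝ) * (1 * y)) ^ 2
    + Complex.normSq ((3 / 5 : ℝ) * x + (4 / 5 : ℝ) * (-1 * y)) ^ 2
    + Complex.normSq ((3 / 5 : ℝ) * x + (4 / 5 : ℝ) * (Complex.I * y)) ^ 2
    + Complex.normSq ((3 / 5 : ℝ) * x + (4 / 5 : ℝ) * (-Complex.I * y)) ^ 2
    = 4 / 625 * (81 * (Complex.normSq x * Complex.normSq x)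
      + 256 * (Complex.normSq y * Complex.normSq y)
      + 576 * (Complex.normSq x * Complex.normSq y)) := by
  simp only [Complex.normSq_apply, Complex.add_re, Complex.add_im, Complex.mul_re, Complex.mul_im,
    Complex.ofReal_re, Complex.ofReal_im, Complex.I_re, Complex.I_im, Complex.neg_re,
    Complex.neg_im, Complex.one_re, Complex.one_im]
  ring

theorem moment_self_eq_two_mul [IsProbabilityMeasure μ]
    (hμ : ∀ V : Matrix.unitaryGroup (Fin d) ℂ, Measure.map (fun U => V * U) μ = μ)
    {i k : Fin d} (hik : i ≠ k) (j : Fin d) :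
    moment μ j i i = 2 * moment μ j i k := by
  have hc : (3 / 5 : ℝ) ^ 2 + (4 / 5 : ℝ) ^ 2 = 1 := by norm_num
  have hint : ∀ z : ℂ, z * star z = 1 → Integrable (fun U : Matrix.unitaryGroup (Fin d) ℂ =>
      Complex.normSq ((3 / 5 : ℝ) * (U : Matrix (Fin d) (Fin d) ℂ) i j +
        (4 / 5 : ℝ) * (z * (U : Matrix (Fin d) (Fin d) ℂ) k j)) ^ 2) μ := by
    intro z hz
    have hcont := continuous_entry (d := d) i j
    have hcont' := continuous_entry (d := d) k j
    refine Integrable.of_bound (C := 1) (Continuous.aestronglyMeasurable ?_)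
      (ae_of_all _ fun U => ?_)
    · exact (Complex.continuous_normSq.comp ((continuous_const.mul hcont).add
        (continuous_const.mul (continuous_const.mul hcont')))).pow 2
    · have := normSq_entry_le_one
        (⟨_, planeReflection_mem hik hc⟩ * (⟨_, diagonal_update_mem k hz⟩ * U)) i j
      simp only [Submonoid.coe_mul, planeReflection_mul_apply hik, Matrix.diagonal_mul] at this
      rw [Real.norm_of_nonneg (sq_nonneg _)]
      refine pow_le_one₀ (Complex.normSq_nonneg _) ?_
      simpa [hik] using this
  have h1 : (1 : ℂ) * star 1 = 1 := by simp
  have h2 : (-1 : ℂ) * star (-1) = 1 := by simp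
  have h3 : Complex.I * star Complex.I = 1 := by simp
  have h4 : -Complex.I * star (-Complex.I) = 1 := by simp
  have key := congrArg (fun f : Matrix.unitaryGroup (Fin d) ℂ → ℝ => ∫ U, f U ∂μ)
    (funext fun U : Matrix.unitaryGroup (Fin d) ℂ =>
      phase_average ((U : Matrix (Fin d) (Fin d) ℂ) i j) ((U : Matrix (Fin d) (Fin d) ℂ) k j))
  rw [integral_add (((hint _ h1).fun_add (hint _ h2)).fun_add (hint _ h3)) (hint _ h4),
    integral_add ((hint _ h1).fun_add (hint _ h2)) (hint _ h3),
    integral_add (hint _ h1) (hint _ h2),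
    integral_combination hμ hik j hc h1, integral_combination hμ hik j hc h2,
    integral_combination hμ hik j hc h3, integral_combination hμ hik j hc h4,
    integral_const_mul,
    integral_add (((integrable_normSq_mul μ i i j).const_mul _).fun_add
      ((integrable_normSq_mul μ k k j).const_mul _)) ((integrable_normSq_mul μ i k j).const_mul _),
    integral_add ((integrable_normSq_mul μ i i j).const_mul _)
      ((integrable_normSq_mul μ k k j).const_mul _),
    integral_const_mul, integral_const_mul, integral_const_mul] at key
  change _ = 4 / 625 * (81 * moment μ j i i + 256 * moment μ j k k + 576 * moment μ j i k) at key
  rw [← moment_self_eq hμ j i k] at key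
  linarith

theorem sum_normSq_column (U : Matrix.unitaryGroup (Fin d) ℂ) (j : Fin d) :
    ∑ i, Complex.normSq ((U : Matrix (Fin d) (Fin d) ℂ) i j) = 1 := by
  have h := congrFun (congrFun (Matrix.mem_unitaryGroup_iff'.mp U.2) j) j
  rw [Matrix.star_eq_conjTranspose, Matrix.mul_apply] at h
  simp only [Matrix.conjTranspose_apply, Matrix.one_apply_eq] at h
  have : ((∑ i, Complex.normSq ((U : Matrix (Fin d) (Fin d) ℂ) i j) : ℝ) : ℂ) = 1 := by
    rw [← h]
    push_cast
    exact Finset.sum_congr rfl fun i _ => Complex.normSq_eq_conj_mul_self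
  exact_mod_cast this

theorem sum_moment [IsProbabilityMeasure μ] (j : Fin d) : ∑ i, ∑ k, moment μ j i k = 1 := by
  have h : ∀ U : Matrix.unitaryGroup (Fin d) ℂ,
      ∑ i, ∑ k, Complex.normSq ((U : Matrix (Fin d) (Fin d) ℂ) i j) *
        Complex.normSq ((U : Matrix (Fin d) (Fin d) ℂ) k j) = 1 := by
    intro U
    rw [← Finset.sum_mul_sum, sum_normSq_column, one_mul]
  have hint : ∫ U : Matrix.unitaryGroup (Fin d) ℂ,
      ∑ i, ∑ k, Complex.normSq ((U : Matrix (Fin d) (Fin d) ℂ) i j) *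
        Complex.normSq ((U : Matrix (Fin d) (Fin d) ℂ) k j) ∂μ = 1 := by
    simp_rw [h]
    simp
  rw [← hint, integral_finsetSum _ fun i _ => integrable_finsetSum _ fun k _ =>
    integrable_normSq_mul μ i k j]
  refine Finset.sum_congr rfl fun i _ => ?_
  rw [integral_finsetSum _ fun k _ => integrable_normSq_mul μ i k j]
  rfl

theorem moment_eq [IsProbabilityMeasure μ]
    (hμ : ∀ V : Matrix.unitaryGroup (Fin d) ℂ, Measure.map (fun U => V * U) μ = μ)
    (j i k : Fin d) :
    moment μ j i k = (1 + if i = k then 1 else 0) / (d * (d + 1)) := by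
  have hd : (0 : ℝ) < d := by exact_mod_cast j.pos
  have hm : ∀ i k, moment μ j i k = moment μ j j j / 2 * (1 + if i = k then 1 else 0) := by
    intro i k
    rw [moment_self_eq hμ j j i]
    split_ifs with h
    · subst h; ring
    · rw [moment_self_eq_two_mul hμ h]; ring
  have hs := sum_moment (μ := μ) j
  generalize moment μ j j j = a at hm
  simp_rw [hm, ← Finset.mul_sum, Finset.sum_add_distrib] at hs
  simp only [Finset.sum_const, Finset.card_univ, Fintype.card_fin, nsmul_eq_mul, mul_one,
    Finset.sum_ite_eq, Finset.mem_univ, if_true] at hs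
  have ha : a / 2 = 1 / (d * (d + 1)) := by
    field_simp
    linarith
  rw [hm, ha]
  ring

end Moments

/-! ### Diagonalization of the Hermitian matrix -/

theorem sum_normSq_row (U : Matrix.unitaryGroup (Fin d) ℂ) (i : Fin d) :
    ∑ j, Complex.normSq ((U : Matrix (Fin d) (Fin d) ℂ) i j) = 1 := by
  have h := congrFun (congrFun (Matrix.mem_unitaryGroup_iff.mp U.2) i) i
  rw [Matrix.star_eq_conjTranspose, Matrix.mul_apply] at h
  simp only [Matrix.conjTranspose_apply, Matrix.one_apply_eq] at h
  have : ((∑ j, Complex.normSq ((U : Matrix (Fin d) (Fin d) ℂ) i j) : ℝ) : ℂ) = 1 := by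
    rw [← h]
    push_cast
    exact Finset.sum_congr rfl fun j _ => (Complex.mul_conj _).symm
  exact_mod_cast this

theorem integral_sq_weighted {μ : Measure (Matrix.unitaryGroup (Fin d) ℂ)} [IsProbabilityMeasure μ]
    (hμ : ∀ V : Matrix.unitaryGroup (Fin d) ℂ, Measure.map (fun U => V * U) μ = μ)
    (l : Fin d → ℝ) (j : Fin d) :
    Integrable (fun U : Matrix.unitaryGroup (Fin d) ℂ =>
      (∑ i, l i * Complex.normSq ((U : Matrix (Fin d) (Fin d) ℂ) i j)) ^ 2) μ ∧
    ∫ U : Matrix.unitaryGroup (Fin d) ℂ,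
      (∑ i, l i * Complex.normSq ((U : Matrix (Fin d) (Fin d) ℂ) i j)) ^ 2 ∂μ
      = ((∑ i, l i) ^ 2 + ∑ i, l i ^ 2) / (d * (d + 1)) := by
  have hexp : ∀ U : Matrix.unitaryGroup (Fin d) ℂ,
      (∑ i, l i * Complex.normSq ((U : Matrix (Fin d) (Fin d) ℂ) i j)) ^ 2
      = ∑ i, ∑ k, l i * l k * (Complex.normSq ((U : Matrix (Fin d) (Fin d) ℂ) i j) *
          Complex.normSq ((U : Matrix (Fin d) (Fin d) ℂ) k j)) := by
    intro U
    rw [pow_two, Finset.sum_mul_sum]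
    exact Finset.sum_congr rfl fun i _ => Finset.sum_congr rfl fun k _ => by ring
  have hint := fun i k : Fin d => (integrable_normSq_mul μ i k j).const_mul (l i * l k)
  simp_rw [hexp]
  refine ⟨integrable_finsetSum _ fun i _ => integrable_finsetSum _ fun k _ => hint i k, ?_⟩
  have hval : ∀ i k : Fin d, ∫ U : Matrix.unitaryGroup (Fin d) ℂ,
      l i * l k * (Complex.normSq ((U : Matrix (Fin d) (Fin d) ℂ) i j) *
          Complex.normSq ((U : Matrix (Fin d) (Fin d) ℂ) k j)) ∂μ
      = (l i * l k + if i = k then l i * l k else 0) / (d * (d + 1)) := by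
    intro i k
    rw [integral_const_mul]
    change _ * moment μ j i k = _
    rw [moment_eq hμ]
    split_ifs <;> ring
  rw [integral_finsetSum _ fun i _ => integrable_finsetSum _ fun k _ => hint i k]
  simp_rw [fun i : Fin d => integral_finsetSum Finset.univ fun k _ => hint i k, hval,
    ← Finset.sum_div, Finset.sum_add_distrib, ← Finset.sum_mul_sum]
  simp [pow_two]

/-- After translation by a matrix of eigenvectors, the sum of squared deviations is expressed
through the eigenvalues and the squared moduli of the entries of `U`. -/
theorem sum_deviation_eigenvectorUnitary_mul (hd : 1 ≤ d) {H : Matrix (Fin d) (Fin d) ℂ}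
    (hH : H.IsHermitian) (U : Matrix.unitaryGroup (Fin d) ℂ) :
    ∑ j : Fin d, ‖(((hH.eigenvectorUnitary * U : Matrix.unitaryGroup (Fin d) ℂ) :
        Matrix (Fin d) (Fin d) ℂ)ᴴ * H * ((hH.eigenvectorUnitary * U :
        Matrix.unitaryGroup (Fin d) ℂ) : Matrix (Fin d) (Fin d) ℂ)) j j - H.trace / d‖ ^ 2
    = ∑ j, (∑ i, hH.eigenvalues i * Complex.normSq ((U : Matrix (Fin d) (Fin d) ℂ) i j)) ^ 2
      - (∑ i, hH.eigenvalues i) ^ 2 / d := by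
  have hd0 : (d : ℝ) ≠ 0 := by positivity
  set W := hH.eigenvectorUnitary with hW
  set T := ∑ i, hH.eigenvalues i with hT
  have htr : H.trace = ((T : ℝ) : ℂ) := by
    rw [hH.trace_eq_sum_eigenvalues, hT]; simp
  have hWW : (W : Matrix (Fin d) (Fin d) ℂ)ᴴ * (W : Matrix (Fin d) (Fin d) ℂ) = 1 :=
    Matrix.mem_unitaryGroup_iff'.mp W.2
  have hD : (W : Matrix (Fin d) (Fin d) ℂ)ᴴ * H * (W : Matrix (Fin d) (Fin d) ℂ)
      = Matrix.diagonal (RCLike.ofReal ∘ hH.eigenvalues) := by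
    conv_lhs => rw [hH.spectral_theorem, Unitary.conjStarAlgAut_apply, ← hW,
      Matrix.star_eq_conjTranspose]
    calc _ = ((W : Matrix (Fin d) (Fin d) ℂ)ᴴ * (W : Matrix (Fin d) (Fin d) ℂ)) *
          Matrix.diagonal (RCLike.ofReal ∘ hH.eigenvalues) *
          ((W : Matrix (Fin d) (Fin d) ℂ)ᴴ * (W : Matrix (Fin d) (Fin d) ℂ)) := by
            simp only [Matrix.mul_assoc]
      _ = _ := by rw [hWW, Matrix.one_mul, Matrix.mul_one]
  have hentry : ∀ j, (((W * U : Matrix.unitaryGroup (Fin d) ℂ) :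
        Matrix (Fin d) (Fin d) ℂ)ᴴ * H * ((W * U :
        Matrix.unitaryGroup (Fin d) ℂ) : Matrix (Fin d) (Fin d) ℂ)) j j
      = ((∑ i, hH.eigenvalues i * Complex.normSq ((U : Matrix (Fin d) (Fin d) ℂ) i j) : ℝ) : ℂ) := by
    intro j
    have : ((W * U : Matrix.unitaryGroup (Fin d) ℂ) :
        Matrix (Fin d) (Fin d) ℂ)ᴴ * H * ((W * U :
        Matrix.unitaryGroup (Fin d) ℂ) : Matrix (Fin d) (Fin d) ℂ)
        = (U : Matrix (Fin d) (Fin d) ℂ)ᴴ * Matrix.diagonal (RCLike.ofReal ∘ hH.eigenvalues)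
          * (U : Matrix (Fin d) (Fin d) ℂ) := by
      rw [← hD, Submonoid.coe_mul, Matrix.conjTranspose_mul]
      simp only [Matrix.mul_assoc]
    rw [this, Matrix.mul_apply]
    push_cast
    refine Finset.sum_congr rfl fun i _ => ?_
    rw [Matrix.mul_diagonal, Complex.normSq_eq_conj_mul_self]
    simp only [Matrix.conjTranspose_apply, Function.comp_apply, RCLike.star_def]
    change _ * (hH.eigenvalues i : ℂ) * _ = _
    ring
  have hsum : ∑ j, ∑ i, hH.eigenvalues i * Complex.normSq ((U : Matrix (Fin d) (Fin d) ℂ) i j)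
      = T := by
    rw [Finset.sum_comm]
    simp_rw [← Finset.mul_sum, sum_normSq_row, mul_one, hT]
  have hsq : ∀ x : ℝ, ‖(x : ℂ) - ((T : ℝ) : ℂ) / d‖ ^ 2 = x ^ 2 - 2 * (T / d) * x + (T / d) ^ 2 := by
    intro x
    have : (x : ℂ) - ((T : ℝ) : ℂ) / d = ((x - T / d : ℝ) : ℂ) := by push_cast; rfl
    rw [this, Complex.norm_real, Real.norm_eq_abs, sq_abs]
    ring
  simp_rw [hentry, htr, hsq]
  rw [Finset.sum_add_distrib, Finset.sum_sub_distrib, ← Finset.mul_sum, hsum]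
  simp
  field_simp
  ring

theorem trace_mul_self_eq {H : Matrix (Fin d) (Fin d) ℂ} (hH : H.IsHermitian) :
    (H * H).trace = ((∑ i, hH.eigenvalues i ^ 2 : ℝ) : ℂ) := by
  conv_lhs => rw [hH.spectral_theorem, ← map_mul, Unitary.conjStarAlgAut_apply,
    Matrix.trace_mul_comm, ← mul_assoc, Matrix.mem_unitaryGroup_iff'.mp (Subtype.property _),
    one_mul, Matrix.diagonal_mul_diagonal, Matrix.trace_diagonal]
  push_cast
  exact Finset.sum_congr rfl fun i _ => (pow_two _).symm

end UnitaryVariance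

/-- For a Hermitian matrix `H`, over the unitary group `U(d)` with its normalized Haar
(probability) measure `μ`:
`∫_{U(d)} ∑_j |(U* H U)_{jj} − Tr(H)/d|² dμ(U) = Tr(H²)/(d+1) − (Tr H)²/(d(d+1))`. -/
theorem unitary_hermitian_variance (d : ℕ) (hd : 1 ≤ d)
    (H : Matrix (Fin d) (Fin d) ℂ) (hH : H.IsHermitian)
    (μ : Measure (Matrix.unitaryGroup (Fin d) ℂ)) [IsProbabilityMeasure μ]
    (hμ : ∀ V : Matrix.unitaryGroup (Fin d) ℂ,
      Measure.map (fun U => V * U) μ = μ) :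
    ((∫ U : Matrix.unitaryGroup (Fin d) ℂ,
        ∑ j : Fin d,
          ‖((U : Matrix (Fin d) (Fin d) ℂ)ᴴ * H * (U : Matrix (Fin d) (Fin d) ℂ)) j j
            - H.trace / d‖ ^ 2 ∂μ : ℝ) : ℂ)
      = (H * H).trace / (d + 1) - H.trace ^ 2 / (d * (d + 1)) := by
  have hcont : Continuous fun U : Matrix.unitaryGroup (Fin d) ℂ => ∑ j : Fin d,
      ‖((U : Matrix (Fin d) (Fin d) ℂ)ᴴ * H * (U : Matrix (Fin d) (Fin d) ℂ)) j j
        - H.trace / d‖ ^ 2 := by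
    have hv : Continuous fun U : Matrix.unitaryGroup (Fin d) ℂ => (U : Matrix (Fin d) (Fin d) ℂ) :=
      continuous_subtype_val
    refine continuous_finsetSum _ fun j _ => ?_
    exact (((((hv.matrix_conjTranspose.matrix_mul continuous_const).matrix_mul
      hv).matrix_elem j j).sub continuous_const).norm).pow 2
  have hd0 : (d : ℝ) ≠ 0 := by positivity
  have hd1 : (d : ℝ) + 1 ≠ 0 := by positivity
  have hI := fun j => UnitaryVariance.integral_sq_weighted hμ hH.eigenvalues j
  rw [← UnitaryVariance.integral_translate hμ hcont hH.eigenvectorUnitary]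
  simp_rw [UnitaryVariance.sum_deviation_eigenvectorUnitary_mul hd hH]
  rw [integral_sub (integrable_finsetSum _ fun j _ => (hI j).1) (integrable_const _),
    integral_finsetSum _ fun j _ => (hI j).1]
  simp_rw [fun j => (hI j).2]
  have htr : H.trace = ((∑ i, hH.eigenvalues i : ℝ) : ℂ) := by
    rw [hH.trace_eq_sum_eigenvalues]; simp
  rw [UnitaryVariance.trace_mul_self_eq hH, htr]
  generalize ∑ i, hH.eigenvalues i = T
  generalize ∑ i, hH.eigenvalues i ^ 2 = S
  norm_cast
  simp
  field_simp
  ring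
end
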